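/- Unique minimizing trajectory (dimension one): assume d = 1, the Cramér moment assumption 0 ∈ interior(D_L), that X₁ is not almost surely constant, and let f : [0,1] → ℝ be a Lipschitz function not identically zero. Let λ ∈ ℝ be such that λ f(t) ∈ interior(D_L) for every t ∈ [0,1], and put x := ∫₀¹ f(t)·K'(λ f(t)) dt and h*(t) := ∫₀ᵗ K'(λ f(s)) ds for t ∈ [0,1]. Then h* ∈ BV([0,1];ℝ), ∫₀¹ f dμ_{h*} = x, I_D(h*) = I_f(x), and h* is the unique minimizer: every h ∈ BV([0,1];ℝ) with ∫₀¹ f dμ_h = x and I_D(h) = I_f(x) equals h*. -/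

import Mathlib

/-!
The proof is Legendre–Fenchel duality on path space together with a first-variation argument.

Write `g = λ f` and `V = K'(g)`, so that `h* = ∫ V`. The tangent inequality for `K` at the interior
points `g t` (`cgf_tangent`) gives `I(V t) = g t * V t - K (g t)` pointwise; integrating it also
gives `I_f(x) = λ x - E_f(λ) = ∫ I(V t) dt`. Two bounds then settle the value of `I_D(h*)`:

* `ID_upper` (Jensen): `I_D(∫ V) ≤ ∫ I(V t) dt`;
* `ID_lower` (duality): `I_D(h) ≥ ∫ γ dμ_h - ∫ K(γ) dt` for every `h` and every continuous `γ` with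
  values in the domain of `K`. With `γ = g` and `∫ f dμ_h = x` the right side is `λ x - E_f(λ)`.

For uniqueness, a minimizer `h` makes `γ = g` a maximizer of the right side of the duality bound.
Since `g` stays in a compact subset of the interior of the domain, it may be perturbed in every
bounded continuous direction `φ`, and the first-order condition (`first_variation`) reads
`∫ φ dμ_h = ∫ φ V dt`. Hence `μ_h` has density `V`, that is `h = h*`. Uniqueness thus rests on
differentiability of `K` rather than on its strict convexity.
-/

open Set Filter Topology MeasureTheory
open scoped ENNReal

noncomputable section

/-- The Laplace transform `L(u) = E[exp(u X₁)]` of a real random variable. -/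
def lap1 {Ω : Type*} [MeasurableSpace Ω] (P : Measure Ω) (X1 : Ω → ℝ) (u : ℝ) : ℝ≥0∞ :=
  ∫⁻ ω, ENNReal.ofReal (Real.exp (u * X1 ω)) ∂P

/-- The effective domain `D_L` of the Laplace transform. -/
def lapDom1 {Ω : Type*} [MeasurableSpace Ω] (P : Measure Ω) (X1 : Ω → ℝ) : Set ℝ :=
  {u | lap1 P X1 u ≠ ⊤}

/-- The cumulant generating function `K = log L` (junk value where `L = ∞`). -/
def cgfK1 {Ω : Type*} [MeasurableSpace Ω] (P : Measure Ω) (X1 : Ω → ℝ) (u : ℝ) : ℝ :=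
  Real.log (lap1 P X1 u).toReal

/-- The Legendre–Fenchel transform `I(v) = sup_u (u v − K(u))`, with values in `[0,∞]`. -/
def rateI1 {Ω : Type*} [MeasurableSpace Ω] (P : Measure Ω) (X1 : Ω → ℝ) (v : ℝ) : ℝ≥0∞ :=
  ⨆ u ∈ lapDom1 P X1, ENNReal.ofReal (u * v - cgfK1 P X1 u)

/-- The effective domain of `E_f(λ) = ∫₀¹ K(λ f(t)) dt`. -/
def EfDom1 {Ω : Type*} [MeasurableSpace Ω] (P : Measure Ω) (X1 : Ω → ℝ) (f : ℝ → ℝ) :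
    Set ℝ :=
  {l | (∀ᵐ t ∂(MeasureTheory.volume.restrict (Icc (0:ℝ) 1)), lap1 P X1 (l * f t) ≠ ⊤) ∧
    IntegrableOn (fun t => cgfK1 P X1 (l * f t)) (Icc (0:ℝ) 1)}

/-- The rate function `I_f = (E_f)^*`. -/
def rateIf1 {Ω : Type*} [MeasurableSpace Ω] (P : Measure Ω) (X1 : Ω → ℝ) (f : ℝ → ℝ)
    (x : ℝ) : ℝ≥0∞ :=
  ⨆ l ∈ EfDom1 P X1 f, ENNReal.ofReal (l * x - ∫ t in Icc (0:ℝ) 1, cgfK1 P X1 (l * f t))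

/-- `h` is càdlàg on `[0,1]`. -/
def Cadlag01 {E : Type*} [TopologicalSpace E] (h : ℝ → E) : Prop :=
  (∀ t ∈ Ico (0:ℝ) 1, Tendsto h (nhdsWithin t (Ioi t)) (nhds (h t))) ∧
  ∀ t ∈ Ioc (0:ℝ) 1, ∃ L, Tendsto h (nhdsWithin t (Iio t)) (nhds L)

/-- `BV[0,1]`: càdlàg functions on `[0,1]` of finite total variation. -/
def BVset (E : Type*) [NormedAddCommGroup E] : Set (ℝ → E) :=
  {h | Cadlag01 h ∧ eVariationOn h (Icc (0:ℝ) 1) ≠ ⊤}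

/-- `h` with its value at `0` replaced by `0`. -/
def zeroAt0 {E : Type*} [Zero E] (h : ℝ → E) : ℝ → E := fun t => if t = 0 then 0 else h t

/-- The rate function `I_D(h)`. -/
def ID {E : Type*} [NormedAddCommGroup E] [NormedSpace ℝ E] (I : E → ℝ≥0∞) (h : ℝ → E) :
    ℝ≥0∞ :=
  ⨆ (k : ℕ) (t : Fin (k+1) → ℝ) (_ : StrictMono t) (_ : t 0 = 0) (_ : t (Fin.last k) = 1),
    ∑ i : Fin k, ENNReal.ofReal (t i.succ - t i.castSucc) *
      I ((t i.succ - t i.castSucc)⁻¹ • (zeroAt0 h (t i.succ) - zeroAt0 h (t i.castSucc)))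

/-- `∫₀¹ f dμ_h = x`, where `μ_h` is the (unique) signed Borel measure on `[0,1]` with
distribution function `h`; `μ_h` is encoded by a Jordan-type representation
`μ_h = μp − μm` with `μp`, `μm` finite measures supported on `[0,1]`. -/
def StieltjesIntegralEq (f : ℝ → ℝ) (h : ℝ → ℝ) (x : ℝ) : Prop :=
  ∃ μp μm : Measure ℝ, IsFiniteMeasure μp ∧ IsFiniteMeasure μm ∧
    μp (Icc (0:ℝ) 1)ᶜ = 0 ∧ μm (Icc (0:ℝ) 1)ᶜ = 0 ∧
    (∀ t ∈ Icc (0:ℝ) 1, (μp (Icc 0 t)).toReal - (μm (Icc 0 t)).toReal = h t) ∧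
    (∫ t, f t ∂μp) - (∫ t, f t ∂μm) = x

/-! ### The cumulant generating function -/

lemma toReal_lap1 {Ω : Type*} [MeasurableSpace Ω] (P : Measure Ω)
    (X1 : Ω → ℝ) (hX1 : Measurable X1) (u : ℝ) :
    (lap1 P X1 u).toReal = ProbabilityTheory.mgf X1 P u := by
  unfold lap1 ProbabilityTheory.mgf
  rw [integral_eq_lintegral_of_nonneg_ae (ae_of_all _ fun ω => (Real.exp_pos _).le)]
  exact (by fun_prop : Measurable fun ω => Real.exp (u * X1 ω)).aestronglyMeasurable

lemma cgfK1_eq_cgf {Ω : Type*} [MeasurableSpace Ω] (P : Measure Ω)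
    (X1 : Ω → ℝ) (hX1 : Measurable X1) : cgfK1 P X1 = ProbabilityTheory.cgf X1 P := by
  funext u
  rw [cgfK1, toReal_lap1 P X1 hX1, ProbabilityTheory.cgf]

lemma lapDom1_eq {Ω : Type*} [MeasurableSpace Ω] (P : Measure Ω)
    (X1 : Ω → ℝ) (hX1 : Measurable X1) :
    lapDom1 P X1 = ProbabilityTheory.integrableExpSet X1 P := by
  ext u
  have hm : AEStronglyMeasurable (fun ω => Real.exp (u * X1 ω)) P :=
    (by fun_prop : Measurable fun ω => Real.exp (u * X1 ω)).aestronglyMeasurable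
  simp only [lapDom1, lap1, ProbabilityTheory.integrableExpSet, mem_ofPred_eq]
  exact lintegral_ofReal_ne_top_iff_integrable hm (ae_of_all _ fun ω => (Real.exp_pos _).le)

/-- The tangent line of `K` at an interior point `w` lies below `K` on the whole domain. It is
obtained from `exp a ≥ exp b * (1 + a - b)` with `a = (u - w) X` and `b = (u - w) K'(w)`,
integrated against the tilted weight `exp (w X)`. -/
lemma cgf_tangent {Ω : Type*} [MeasurableSpace Ω] (P : Measure Ω) [IsProbabilityMeasure P]
    (X : Ω → ℝ) {w u : ℝ}
    (hw : w ∈ interior (ProbabilityTheory.integrableExpSet X P))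
    (hu : u ∈ ProbabilityTheory.integrableExpSet X P) :
    ProbabilityTheory.cgf X P w + deriv (ProbabilityTheory.cgf X P) w * (u - w) ≤
      ProbabilityTheory.cgf X P u := by
  have hwi : Integrable (fun ω => Real.exp (w * X ω)) P :=
    interior_subset (s := ProbabilityTheory.integrableExpSet X P) hw
  have hui : Integrable (fun ω => Real.exp (u * X ω)) P := hu
  have hpos := ProbabilityTheory.mgf_pos hwi
  have hXi : Integrable (fun ω => X ω * Real.exp (w * X ω)) P := by
    simpa using
      ProbabilityTheory.integrable_pow_mul_exp_of_mem_interior_integrableExpSet hw 1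
  set m := deriv (ProbabilityTheory.cgf X P) w with hm
  have hmd : (∫ ω, X ω * Real.exp (w * X ω) ∂P) = m * ProbabilityTheory.mgf X P w := by
    rw [hm, ProbabilityTheory.deriv_cgf hw]
    rw [div_mul_cancel₀ _ hpos.ne']
  have key : Real.exp ((u - w) * m) * ProbabilityTheory.mgf X P w
      ≤ ProbabilityTheory.mgf X P u := by
    have h1 : ∀ ω, Real.exp ((u - w) * m) *
        ((1 - (u - w) * m) * Real.exp (w * X ω) + (u - w) * (X ω * Real.exp (w * X ω)))
        ≤ Real.exp (u * X ω) := by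
      intro ω
      have h2 : Real.exp (u * X ω) =
          Real.exp ((u - w) * m) * (Real.exp ((u - w) * (X ω - m)) * Real.exp (w * X ω)) := by
        rw [← Real.exp_add, ← Real.exp_add]; congr 1; ring
      rw [h2]
      have h3 := Real.add_one_le_exp ((u - w) * (X ω - m))
      have h4 := mul_le_mul_of_nonneg_right h3 (Real.exp_pos (w * X ω)).le
      refine mul_le_mul_of_nonneg_left ?_ (Real.exp_pos _).le
      linarith
    have h5 := integral_mono (μ := P)
      (((hwi.const_mul (1 - (u - w) * m)).add (hXi.const_mul (u - w))).const_mul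
        (Real.exp ((u - w) * m))) hui h1
    simp only [Pi.add_apply] at h5
    rw [integral_const_mul, integral_add (hwi.const_mul _) (hXi.const_mul _),
      integral_const_mul, integral_const_mul, hmd] at h5
    change _ * ((1 - (u - w) * m) * ProbabilityTheory.mgf X P w + _) ≤
      ProbabilityTheory.mgf X P u at h5
    linarith
  have := Real.log_le_log (by positivity) key
  rw [Real.log_mul (Real.exp_pos _).ne' hpos.ne', Real.log_exp] at this
  simp only [ProbabilityTheory.cgf]
  linarith

/-! ### Riemann–Stieltjes sums -/

/-- The set of points of `[0,t]`, taken empty at `t = 0`; for a measure `μ` on `[0,1]` its mass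
is the distribution function of `μ` with the value at `0` replaced by `0`. -/
def initSeg (t : ℝ) : Set ℝ := if t = 0 then ∅ else Icc 0 t

lemma measurableSet_initSeg (t : ℝ) : MeasurableSet (initSeg t) := by
  unfold initSeg; split_ifs <;> measurability

lemma initSeg_mono {s t : ℝ} (hs : 0 ≤ s) (hst : s ≤ t) : initSeg s ⊆ initSeg t := by
  unfold initSeg
  split_ifs with h1 h2 h2
  · simp
  · simp
  · exact absurd (le_antisymm (h2 ▸ hst) hs) h1
  · exact Icc_subset_Icc_right hst

lemma initSeg_diff_subset {s t : ℝ} :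
    initSeg t \ initSeg s ⊆ Icc s t := by
  intro r hr
  unfold initSeg at hr
  split_ifs at hr with h1 h2 h2
  · simp at hr
  · simp at hr
  · simpa [h2] using hr
  · simp only [Set.mem_sdiff, mem_Icc, not_and, not_le] at hr
    exact ⟨(hr.2 hr.1.1).le, hr.1.2⟩

/-- Riemann–Stieltjes sums over the uniform partition of mesh `1/n`, with right end points as
tags; the atom of `μ` at `0` is counted in the first cell. -/
lemma riemann_est (μ : Measure ℝ) [IsFiniteMeasure μ] (hμ : μ (Icc (0:ℝ) 1)ᶜ = 0)
    (n : ℕ) (hn : 0 < n) (g : ℝ → ℝ) (hg : Continuous g) (ε : ℝ)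
    (hε : ∀ s ∈ Icc (0:ℝ) 1, ∀ t ∈ Icc (0:ℝ) 1, |s - t| ≤ 1 / n → |g s - g t| ≤ ε) :
    |(∫ t, g t ∂μ) - ∑ i ∈ Finset.range n, g (((i + 1 : ℕ) : ℝ) / n) *
      (μ.real (initSeg (((i + 1 : ℕ) : ℝ) / n)) - μ.real (initSeg ((i : ℝ) / n)))| ≤
      ε * μ.real univ := by
  have hn' : (0:ℝ) < n := by exact_mod_cast hn
  have hres : μ.restrict (Icc (0:ℝ) 1) = μ :=
    Measure.restrict_eq_self_of_ae_mem (by rw [ae_iff]; exact hμ)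
  have h0 : initSeg (((0:ℕ) : ℝ) / n) = ∅ := by simp [initSeg]
  have h1 : initSeg ((n : ℝ) / n) = Icc 0 1 := by
    rw [div_self hn'.ne']; simp [initSeg]
  have hint : ∀ s, s ⊆ Icc (0:ℝ) 1 → IntegrableOn g s μ := fun s hs =>
    (hg.continuousOn.integrableOn_compact isCompact_Icc).mono_set hs
  have hle : ∀ i : ℕ, (i:ℝ) / n ≤ ((i + 1 : ℕ) : ℝ) / n := fun i => by
    gcongr; exact_mod_cast Nat.le_succ i
  have hsub : ∀ i : ℕ, i ≤ n → initSeg ((i : ℝ) / n) ⊆ Icc 0 1 := fun i hi => by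
    rw [← h1]
    exact initSeg_mono (by positivity) (by gcongr)
  have htot : (∫ t, g t ∂μ) = ∑ i ∈ Finset.range n,
      ∫ t in initSeg (((i + 1 : ℕ) : ℝ) / n) \ initSeg ((i : ℝ) / n), g t ∂μ := by
    have : ∀ i ∈ Finset.range n,
        (∫ t in initSeg (((i + 1 : ℕ) : ℝ) / n) \ initSeg ((i : ℝ) / n), g t ∂μ) =
        (∫ t in initSeg (((i + 1 : ℕ) : ℝ) / n), g t ∂μ) -
          ∫ t in initSeg ((i : ℝ) / n), g t ∂μ := fun i hi => by
      rw [setIntegral_sdiff (measurableSet_initSeg _)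
        (hint _ (hsub (i + 1) (Finset.mem_range.1 hi)))
        (initSeg_mono (by positivity) (hle i))]
    rw [Finset.sum_congr rfl this,
      Finset.sum_range_sub (fun i : ℕ => ∫ t in initSeg ((i : ℝ) / n), g t ∂μ), h0, h1, hres]
    simp
  have hmass : ∀ i : ℕ, μ.real (initSeg (((i + 1 : ℕ) : ℝ) / n)) - μ.real (initSeg ((i : ℝ) / n))
      = μ.real (initSeg (((i + 1 : ℕ) : ℝ) / n) \ initSeg ((i : ℝ) / n)) := fun i => by
    rw [measureReal_sdiff (initSeg_mono (by positivity) (hle i)) (measurableSet_initSeg _)]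
  have hcell : ∀ i ∈ Finset.range n,
      |(∫ t in initSeg (((i + 1 : ℕ) : ℝ) / n) \ initSeg ((i : ℝ) / n), g t ∂μ) -
        g (((i + 1 : ℕ) : ℝ) / n) * (μ.real (initSeg (((i + 1 : ℕ) : ℝ) / n)) -
          μ.real (initSeg ((i : ℝ) / n)))| ≤
      ε * (μ.real (initSeg (((i + 1 : ℕ) : ℝ) / n)) - μ.real (initSeg ((i : ℝ) / n))) := by
    intro i hi
    have hi' : i + 1 ≤ n := Finset.mem_range.1 hi
    have hb : ((i + 1 : ℕ) : ℝ) / n ∈ Icc (0:ℝ) 1 :=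
      ⟨by positivity, by rw [div_le_one hn']; exact_mod_cast hi'⟩
    set A := initSeg (((i + 1 : ℕ) : ℝ) / n) \ initSeg ((i : ℝ) / n) with hA
    rw [hmass]
    have hAint : IntegrableOn g A μ := hint _ (sdiff_subset.trans (hsub (i + 1) hi'))
    have : (∫ t in A, g t ∂μ) - g (((i + 1 : ℕ) : ℝ) / n) * μ.real A =
        ∫ t in A, (g t - g (((i + 1 : ℕ) : ℝ) / n)) ∂μ := by
      rw [integral_sub hAint (integrable_const _)]
      simp [mul_comm]
    rw [this, ← Real.norm_eq_abs]
    refine norm_setIntegral_le_of_norm_le_const (measure_lt_top _ _) ?_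
    intro t ht
    have ht1 : t ∈ Icc (0:ℝ) 1 := hsub (i + 1) hi' ht.1
    have ht2 := initSeg_diff_subset ht
    refine hε t ht1 _ hb ?_
    rw [abs_sub_comm, abs_of_nonneg (by linarith [ht2.2])]
    have : ((i + 1 : ℕ) : ℝ) / n = (i : ℝ) / n + 1 / n := by push_cast; ring
    linarith [ht2.1]
  rw [htot, ← Finset.sum_sub_distrib]
  refine (Finset.abs_sum_le_sum_abs _ _).trans ((Finset.sum_le_sum hcell).trans ?_)
  rw [← Finset.mul_sum,
    Finset.sum_range_sub (fun i : ℕ => μ.real (initSeg ((i : ℝ) / n))), h0, h1]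
  have : μ.real univ = μ.real (Icc (0:ℝ) 1) := by
    rw [← hres]; simp
  rw [this]; simp

lemma ofReal_sum_le {ι : Type*} (s : Finset ι) (a : ι → ℝ) :
    ENNReal.ofReal (∑ i ∈ s, a i) ≤ ∑ i ∈ s, ENNReal.ofReal (a i) := by
  classical
  induction s using Finset.induction_on with
  | empty => simp
  | insert i s hi ih =>
    rw [Finset.sum_insert hi, Finset.sum_insert hi]
    exact ENNReal.ofReal_add_le.trans (by gcongr)

/-! ### Upper and lower bounds for the rate function -/

/-- The Legendre–Fenchel transform `v ↦ sup_{u ∈ D} (u v - K u)`, truncated below at `0`. -/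
def legendre (D : Set ℝ) (K : ℝ → ℝ) (v : ℝ) : ℝ≥0∞ :=
  ⨆ u ∈ D, ENNReal.ofReal (u * v - K u)

lemma real_initSeg_volume {t : ℝ} (ht : t ∈ Icc (0:ℝ) 1) :
    (volume.restrict (Icc (0:ℝ) 1)).real (initSeg t) = t := by
  rw [measureReal_restrict_apply (measurableSet_initSeg t)]
  unfold initSeg
  split_ifs with h
  · simp [h]
  · rw [inter_eq_left.2 (Icc_subset_Icc_right ht.2)]
    simp [ht.1]

/-- Duality lower bound: every continuous path `g` in the domain of `K` gives
`∫ g dμ_h - ∫ K(g) dt ≤ I_D(h)`, as the limit of the bounds obtained from the uniform partitions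
by testing the Legendre transform of each cell against the value of `g` at its right end point. -/
lemma ID_lower (D : Set ℝ) (K : ℝ → ℝ) (μp μm : Measure ℝ) [IsFiniteMeasure μp]
    [IsFiniteMeasure μm] (hp : μp (Icc (0:ℝ) 1)ᶜ = 0) (hm : μm (Icc (0:ℝ) 1)ᶜ = 0)
    (h : ℝ → ℝ) (hh : ∀ t ∈ Icc (0:ℝ) 1, (μp (Icc 0 t)).toReal - (μm (Icc 0 t)).toReal = h t)
    (g : ℝ → ℝ) (hg : Continuous g) (hgD : ∀ t, g t ∈ D) (hKg : Continuous fun t => K (g t)) :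
    ENNReal.ofReal ((∫ t, g t ∂μp) - (∫ t, g t ∂μm) - ∫ t in Icc (0:ℝ) 1, K (g t)) ≤
      ID (legendre D K) h := by
  by_cases htop : ID (legendre D K) h = ⊤
  · rw [htop]; exact le_top
  rw [ENNReal.ofReal_le_iff_le_toReal htop]
  set C := μp.real univ + μm.real univ + 1 with hC
  have hCpos : 0 < C := by positivity
  refine le_of_forall_pos_le_add fun η hη => ?_
  set ε := η / C with hε
  have hεpos : 0 < ε := by positivity
  -- a common modulus of continuity for `g` and `K ∘ g`
  obtain ⟨δ₁, hδ₁, H₁⟩ := Metric.uniformContinuousOn_iff.1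
    (isCompact_Icc.uniformContinuousOn_of_continuous (hg.continuousOn (s := Icc (0:ℝ) 1))) ε hεpos
  obtain ⟨δ₂, hδ₂, H₂⟩ := Metric.uniformContinuousOn_iff.1
    (isCompact_Icc.uniformContinuousOn_of_continuous (hKg.continuousOn (s := Icc (0:ℝ) 1))) ε hεpos
  obtain ⟨n, hn⟩ := exists_nat_gt (1 / min δ₁ δ₂)
  have hδ : 0 < min δ₁ δ₂ := lt_min hδ₁ hδ₂
  have hn' : (0:ℝ) < n := lt_trans (by positivity) hn
  have hn0 : 0 < n := by exact_mod_cast hn'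
  have hnδ : 1 / (n:ℝ) < min δ₁ δ₂ := by
    rw [div_lt_comm₀ hn' hδ]; exact hn
  have hg' : ∀ s ∈ Icc (0:ℝ) 1, ∀ t ∈ Icc (0:ℝ) 1, |s - t| ≤ 1 / n → |g s - g t| ≤ ε :=
    fun s hs t ht hst => (H₁ s hs t ht (by
      rw [Real.dist_eq]; exact hst.trans_lt (hnδ.trans_le (min_le_left _ _)))).le
  have hK' : ∀ s ∈ Icc (0:ℝ) 1, ∀ t ∈ Icc (0:ℝ) 1, |s - t| ≤ 1 / n →
      |K (g s) - K (g t)| ≤ ε :=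
    fun s hs t ht hst => (H₂ s hs t ht (by
      rw [Real.dist_eq]; exact hst.trans_lt (hnδ.trans_le (min_le_right _ _)))).le
  have E₁ := riemann_est μp hp n hn0 g hg ε hg'
  have E₂ := riemann_est μm hm n hn0 g hg ε hg'
  have E₃ := riemann_est (volume.restrict (Icc (0:ℝ) 1))
    (by rw [Measure.restrict_apply measurableSet_Icc.compl]; simp) n hn0 (fun t => K (g t)) hKg ε hK'
  have hmem : ∀ i : ℕ, i ≤ n → (i : ℝ) / n ∈ Icc (0:ℝ) 1 := fun i hi =>
    ⟨by positivity, by rw [div_le_one hn']; exact_mod_cast hi⟩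
  have hzero : ∀ t ∈ Icc (0:ℝ) 1, zeroAt0 h t = μp.real (initSeg t) - μm.real (initSeg t) := by
    intro t ht
    unfold zeroAt0 initSeg
    split_ifs with h0
    · simp
    · exact (hh t ht).symm
  -- the contribution of the `i`-th cell
  set a : ℕ → ℝ := fun i => g (((i + 1 : ℕ) : ℝ) / n) *
      (zeroAt0 h (((i + 1 : ℕ) : ℝ) / n) - zeroAt0 h ((i : ℝ) / n)) -
      K (g (((i + 1 : ℕ) : ℝ) / n)) * (((i + 1 : ℕ) : ℝ) / n - (i : ℝ) / n) with ha
  have hsum : ∑ i ∈ Finset.range n, a i =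
      (∑ i ∈ Finset.range n, g (((i + 1 : ℕ) : ℝ) / n) *
        (μp.real (initSeg (((i + 1 : ℕ) : ℝ) / n)) - μp.real (initSeg ((i : ℝ) / n)))) -
      (∑ i ∈ Finset.range n, g (((i + 1 : ℕ) : ℝ) / n) *
        (μm.real (initSeg (((i + 1 : ℕ) : ℝ) / n)) - μm.real (initSeg ((i : ℝ) / n)))) -
      (∑ i ∈ Finset.range n, K (g (((i + 1 : ℕ) : ℝ) / n)) *
        ((volume.restrict (Icc (0:ℝ) 1)).real (initSeg (((i + 1 : ℕ) : ℝ) / n)) -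
          (volume.restrict (Icc (0:ℝ) 1)).real (initSeg ((i : ℝ) / n)))) := by
    rw [← Finset.sum_sub_distrib, ← Finset.sum_sub_distrib]
    refine Finset.sum_congr rfl fun i hi => ?_
    have hi' : i + 1 ≤ n := Finset.mem_range.1 hi
    rw [real_initSeg_volume (hmem _ hi'), real_initSeg_volume (hmem _ (Nat.le_of_succ_le hi')), ha]
    simp only
    rw [hzero _ (hmem _ hi'), hzero _ (hmem _ (Nat.le_of_succ_le hi'))]
    ring
  have hbound : ENNReal.ofReal (∑ i ∈ Finset.range n, a i) ≤ ID (legendre D K) h := by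
    refine (ofReal_sum_le _ _).trans ?_
    set τ : Fin (n + 1) → ℝ := fun i => (i : ℕ) / n with hτ
    have hmono : StrictMono τ := fun i j hij => by
      simp only [hτ]
      gcongr
      exact_mod_cast hij
    unfold ID
    refine le_trans ?_ (le_iSup_of_le n (le_iSup_of_le τ (le_iSup_of_le hmono
      (le_iSup_of_le (by simp [hτ]) (le_iSup_of_le (by simp [hτ, hn'.ne']) le_rfl)))))
    rw [Finset.sum_range]
    refine Finset.sum_le_sum fun i _ => ?_
    have hpos : 0 < τ i.succ - τ i.castSucc := sub_pos.2 (hmono Fin.castSucc_lt_succ)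
    have hav : a i = (τ i.succ - τ i.castSucc) * (g (τ i.succ) *
        ((τ i.succ - τ i.castSucc)⁻¹ • (zeroAt0 h (τ i.succ) - zeroAt0 h (τ i.castSucc))) -
        K (g (τ i.succ))) := by
      have h1 : τ i.succ = ((i.val + 1 : ℕ) : ℝ) / n := by simp [hτ]
      have h2 : τ i.castSucc = (i.val : ℝ) / n := by simp [hτ]
      rw [h1, h2] at hpos ⊢
      rw [smul_eq_mul]
      simp only [ha]
      field_simp
    rw [hav, ENNReal.ofReal_mul hpos.le]
    gcongr
    exact le_iSup₂_of_le (g (τ i.succ)) (hgD _) le_rfl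
  rw [ENNReal.ofReal_le_iff_le_toReal htop] at hbound
  rw [hsum] at hbound
  have hvol : (volume.restrict (Icc (0:ℝ) 1)).real univ = 1 := by simp
  rw [hvol] at E₃
  have hεC : ε * μp.real univ + ε * μm.real univ + ε * 1 = η := by
    rw [hε, hC]; field_simp
  have := (abs_le.1 E₁).2
  have := (abs_le.1 E₂).1
  have := (abs_le.1 E₃).1
  linarith

/-- Jensen upper bound for an absolutely continuous path: if every value `v s` of the velocity
satisfies `u v - K u ≤ Φ` for all `u` in the domain, with `Φ ≥ 0`, then `I_D(∫ v) ≤ ∫ Φ`. -/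
lemma ID_upper (D : Set ℝ) (K v Φ : ℝ → ℝ) (hv : Continuous v) (hΦ : Continuous Φ)
    (hΦ0 : ∀ s, 0 ≤ Φ s) (hK : ∀ u ∈ D, ∀ s, u * v s - K u ≤ Φ s)
    (h : ℝ → ℝ) (hh : ∀ t ∈ Icc (0:ℝ) 1, h t = ∫ s in (0:ℝ)..t, v s) :
    ID (legendre D K) h ≤ ENNReal.ofReal (∫ s in (0:ℝ)..1, Φ s) := by
  have hz : ∀ t ∈ Icc (0:ℝ) 1, zeroAt0 h t = ∫ s in (0:ℝ)..t, v s := fun t ht => by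
    unfold zeroAt0
    split_ifs with h0
    · simp [h0]
    · exact hh t ht
  unfold ID
  refine iSup_le fun k => iSup_le fun t => iSup_le fun hmono => iSup_le fun h0 => iSup_le fun h1 => ?_
  have hmem : ∀ i, t i ∈ Icc (0:ℝ) 1 := fun i =>
    ⟨h0 ▸ hmono.monotone (Fin.zero_le i), h1 ▸ hmono.monotone (Fin.le_last i)⟩
  have hint : ∀ (w : ℝ → ℝ), Continuous w → ∀ a b, IntervalIntegrable w volume a b :=
    fun w hw a b => hw.intervalIntegrable a b
  have hcell : ∀ i : Fin k, ENNReal.ofReal (t i.succ - t i.castSucc) * legendre D K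
      ((t i.succ - t i.castSucc)⁻¹ • (zeroAt0 h (t i.succ) - zeroAt0 h (t i.castSucc))) ≤
      ENNReal.ofReal (∫ s in t i.castSucc..t i.succ, Φ s) := by
    intro i
    have hlt : t i.castSucc < t i.succ := hmono Fin.castSucc_lt_succ
    have hpos : 0 < t i.succ - t i.castSucc := sub_pos.2 hlt
    unfold legendre
    simp only [ENNReal.mul_iSup]
    refine iSup₂_le fun u hu => ?_
    rw [← ENNReal.ofReal_mul hpos.le]
    refine ENNReal.ofReal_le_ofReal ?_
    rw [hz _ (hmem _), hz _ (hmem _),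
      intervalIntegral.integral_interval_sub_left (hint v hv _ _) (hint v hv _ _), smul_eq_mul]
    have h2 : (∫ s in t i.castSucc..t i.succ, (u * v s - K u)) ≤
        ∫ s in t i.castSucc..t i.succ, Φ s :=
      intervalIntegral.integral_mono_on hlt.le (hint _ (by fun_prop) _ _) (hint _ hΦ _ _)
        fun s _ => hK u hu s
    rw [intervalIntegral.integral_sub (hint _ (by fun_prop) _ _) (hint _ (by fun_prop) _ _),
      intervalIntegral.integral_const_mul, intervalIntegral.integral_const, smul_eq_mul] at h2
    refine le_trans (le_of_eq ?_) h2
    field_simp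
  refine (Finset.sum_le_sum fun i _ => hcell i).trans ?_
  rw [← ENNReal.ofReal_sum_of_nonneg fun i _ =>
    intervalIntegral.integral_nonneg (hmono Fin.castSucc_lt_succ).le fun s _ => hΦ0 s]
  refine ENNReal.ofReal_le_ofReal (le_of_eq ?_)
  have htel : ∀ i : Fin k, (∫ s in t i.castSucc..t i.succ, Φ s) =
      (∫ s in (0:ℝ)..t i.succ, Φ s) - ∫ s in (0:ℝ)..t i.castSucc, Φ s := fun i =>
    (intervalIntegral.integral_interval_sub_left (hint Φ hΦ _ _) (hint Φ hΦ _ _)).symm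
  rw [Finset.sum_congr rfl fun i _ => htel i, Finset.sum_sub_distrib]
  have e1 := Fin.sum_univ_succ (fun j : Fin (k+1) => ∫ s in (0:ℝ)..t j, Φ s)
  have e2 := Fin.sum_univ_castSucc (fun j : Fin (k+1) => ∫ s in (0:ℝ)..t j, Φ s)
  rw [h0] at e1
  rw [h1] at e2
  simp only [intervalIntegral.integral_same] at e1
  linarith

/-! ### First variation and densities -/

/-- First-order optimality: if `g` attains the duality lower bound for `h`, then perturbing `g` in
a direction `φ` cannot improve it, so `∫ φ dμ_h ≤ ∫ φ K'(g) dt`. Convexity of `K` bounds the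
difference quotient by `∫ φ K'(g + ε φ) dt`, which converges to the right side. -/
lemma first_variation (D : Set ℝ) (K : ℝ → ℝ)
    (hT : ∀ w ∈ interior D, ∀ u ∈ D, K w + deriv K w * (u - w) ≤ K u)
    (hKc : ContinuousOn K (interior D)) (hKc' : ContinuousOn (deriv K) (interior D))
    (μp μm : Measure ℝ) [IsFiniteMeasure μp]
    [IsFiniteMeasure μm] (hp : μp (Icc (0:ℝ) 1)ᶜ = 0) (hm : μm (Icc (0:ℝ) 1)ᶜ = 0)
    (h : ℝ → ℝ) (hh : ∀ t ∈ Icc (0:ℝ) 1, (μp (Icc 0 t)).toReal - (μm (Icc 0 t)).toReal = h t)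
    (g : ℝ → ℝ) (hg : Continuous g) (hgU : ∀ t, g t ∈ interior D) (hgc : IsCompact (range g))
    (hnn : 0 ≤ (∫ t, g t ∂μp) - (∫ t, g t ∂μm) - ∫ t in Icc (0:ℝ) 1, K (g t))
    (hID : ID (legendre D K) h ≤
      ENNReal.ofReal ((∫ t, g t ∂μp) - (∫ t, g t ∂μm) - ∫ t in Icc (0:ℝ) 1, K (g t)))
    (φ : BoundedContinuousFunction ℝ ℝ) :
    (∫ t, φ t ∂μp) - (∫ t, φ t ∂μm) ≤ ∫ t in Icc (0:ℝ) 1, φ t * deriv K (g t) := by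
  obtain ⟨δ, hδ, hsub⟩ := hgc.exists_cthickening_subset_open isOpen_interior
    (range_subset_iff.2 hgU)
  have hcomp : IsCompact (Metric.cthickening δ (range g)) := hgc.cthickening
  obtain ⟨M, hM⟩ := hcomp.exists_bound_of_continuousOn (hKc'.mono hsub)
  set ε : ℕ → ℝ := fun n => δ / (‖φ‖ + 1) * (1 / ((n:ℝ) + 1)) with hε
  have hεpos : ∀ n, 0 < ε n := fun n => by positivity
  have hε0 : Tendsto ε atTop (𝓝 0) := by
    rw [← mul_zero (δ / (‖φ‖ + 1))]
    exact (tendsto_one_div_add_atTop_nhds_zero_nat (𝕜 := ℝ)).const_mul (δ / (‖φ‖ + 1))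
  have hεφ : ∀ n t, |ε n * φ t| ≤ δ := fun n t => by
    rw [abs_mul, abs_of_pos (hεpos n)]
    have h1 : |φ t| ≤ ‖φ‖ + 1 := by
      have := φ.norm_coe_le_norm t
      rw [Real.norm_eq_abs] at this; linarith
    have h2 : 1 / ((n:ℝ) + 1) ≤ 1 := by
      rw [div_le_one (by positivity)]; linarith [n.cast_nonneg (α := ℝ)]
    calc ε n * |φ t| ≤ (δ / (‖φ‖ + 1) * 1) * (‖φ‖ + 1) := by
          simp only [hε]; gcongr
      _ = δ := by field_simp
  have hmem : ∀ n t, g t + ε n * φ t ∈ Metric.cthickening δ (range g) := fun n t =>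
    Metric.mem_cthickening_of_dist_le _ (g t) _ _ (mem_range_self t) (by
      rw [Real.dist_eq]; simpa using hεφ n t)
  have hcg : ∀ n, Continuous fun t => g t + ε n * φ t := fun n => by fun_prop
  have hcK' : ∀ n, Continuous fun t => deriv K (g t + ε n * φ t) := fun n =>
    hKc'.comp_continuous (hcg n) fun t => hsub (hmem n t)
  have hcK : ∀ n, Continuous fun t => K (g t + ε n * φ t) := fun n =>
    hKc.comp_continuous (hcg n) fun t => hsub (hmem n t)
  have hcK0 : Continuous fun t => K (g t) := hKc.comp_continuous hg hgU
  have hint : ∀ w : ℝ → ℝ, Continuous w → IntegrableOn w (Icc (0:ℝ) 1) := fun w hw =>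
    hw.continuousOn.integrableOn_compact isCompact_Icc
  have hgint : ∀ (μ : Measure ℝ) [IsFiniteMeasure μ], Integrable g μ := fun μ _ => by
    obtain ⟨B, hB⟩ := hgc.isBounded.exists_norm_le
    exact Integrable.of_bound hg.aestronglyMeasurable B
      (ae_of_all _ fun t => hB _ (mem_range_self t))
  have hφint : ∀ (μ : Measure ℝ) [IsFiniteMeasure μ] (c : ℝ),
      Integrable (fun t => c * φ t) μ := fun μ _ c => (φ.integrable μ).const_mul c
  have step : ∀ n, (∫ t, φ t ∂μp) - (∫ t, φ t ∂μm) ≤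
      ∫ t in Icc (0:ℝ) 1, φ t * deriv K (g t + ε n * φ t) := by
    intro n
    have h1 := (ID_lower D K μp μm hp hm h hh _ (hcg n)
      (fun t => interior_subset (hsub (hmem n t))) (hcK n)).trans hID
    rw [ENNReal.ofReal_le_ofReal_iff hnn, integral_add (hgint μp) (hφint μp _),
      integral_add (hgint μm) (hφint μm _), integral_const_mul, integral_const_mul] at h1
    have h2 : (∫ t in Icc (0:ℝ) 1, K (g t + ε n * φ t)) - (∫ t in Icc (0:ℝ) 1, K (g t)) ≤
        ∫ t in Icc (0:ℝ) 1, ε n * (φ t * deriv K (g t + ε n * φ t)) := by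
      rw [← integral_sub (hint _ (hcK n)) (hint _ hcK0)]
      refine integral_mono ((hint _ (hcK n)).sub (hint _ hcK0))
        (hint _ (((φ.continuous.mul (hcK' n))).const_mul _)) fun t => ?_
      have := hT _ (hsub (hmem n t)) _ (interior_subset (hgU t))
      simp only
      linarith
    rw [integral_const_mul] at h2
    have h3 := hεpos n
    refine le_of_mul_le_mul_left ?_ h3
    linarith
  refine ge_of_tendsto' (x := atTop)
    (f := fun n => ∫ t in Icc (0:ℝ) 1, φ t * deriv K (g t + ε n * φ t)) ?_ step
  refine tendsto_integral_of_dominated_convergence (fun _ => ‖φ‖ * M)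
    (fun n => (φ.continuous.mul (hcK' n)).aestronglyMeasurable) (integrable_const _)
    (fun n => ae_of_all _ fun t => ?_) (ae_of_all _ fun t => ?_)
  · rw [norm_mul]
    exact mul_le_mul (φ.norm_coe_le_norm t) (hM _ (hmem n t)) (norm_nonneg _) (norm_nonneg _)
  · refine Tendsto.const_mul _ ?_
    have hca : ContinuousAt (deriv K) (g t) :=
      hKc'.continuousAt (isOpen_interior.mem_nhds (hgU t))
    refine hca.tendsto.comp ?_
    simpa using (hε0.mul_const (φ t)).const_add (g t)

/-- A continuous signed density on `[0,1]` is the difference of two finite measures. -/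
lemma exists_density (V : ℝ → ℝ) (hV : Continuous V) :
    ∃ μp μm : Measure ℝ, IsFiniteMeasure μp ∧ IsFiniteMeasure μm ∧
      μp (Icc (0:ℝ) 1)ᶜ = 0 ∧ μm (Icc (0:ℝ) 1)ᶜ = 0 ∧
      ∀ φ : ℝ → ℝ, IntegrableOn φ (Icc (0:ℝ) 1) →
        (∫ t, φ t ∂μp) - (∫ t, φ t ∂μm) = ∫ t in Icc (0:ℝ) 1, φ t * V t := by
  have hfin : ∀ W : ℝ → ℝ, Continuous W → IsFiniteMeasure
      ((volume.restrict (Icc (0:ℝ) 1)).withDensity fun t => ENNReal.ofReal (W t)) :=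
    fun W hW => isFiniteMeasure_withDensity_ofReal
      (hW.continuousOn.integrableOn_compact isCompact_Icc).2
  have hsupp : ∀ W : ℝ → ℝ, Continuous W →
      ((volume.restrict (Icc (0:ℝ) 1)).withDensity fun t => ENNReal.ofReal (W t))
        (Icc (0:ℝ) 1)ᶜ = 0 := fun W hW =>
    withDensity_absolutelyContinuous _ _
      (by rw [Measure.restrict_apply measurableSet_Icc.compl]; simp)
  have hval : ∀ W : ℝ → ℝ, Continuous W → ∀ φ : ℝ → ℝ,
      (∫ t, φ t ∂((volume.restrict (Icc (0:ℝ) 1)).withDensity fun t => ENNReal.ofReal (W t))) =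
      ∫ t in Icc (0:ℝ) 1, max (W t) 0 * φ t := fun W hW φ => by
    rw [integral_withDensity_eq_integral_toReal_smul (by fun_prop)
      (ae_of_all _ fun t => ENNReal.ofReal_lt_top)]
    simp [ENNReal.toReal_ofReal']
  refine ⟨_, _, hfin V hV, hfin (fun t => - V t) hV.neg, hsupp V hV,
    hsupp (fun t => - V t) hV.neg, fun φ hφ => ?_⟩
  rw [hval V hV, hval (fun t => - V t) hV.neg, ← integral_sub]
  · refine integral_congr_ae (ae_of_all _ fun t => ?_)
    rcases le_total (V t) 0 with h | h
    · simp [max_eq_right h, max_eq_left (neg_nonneg.2 h), mul_comm]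
    · simp [max_eq_left h, max_eq_right (neg_nonpos.2 h), mul_comm]
  · exact IntegrableOn.continuousOn_mul (by fun_prop) hφ isCompact_Icc
  · exact IntegrableOn.continuousOn_mul (by fun_prop) hφ isCompact_Icc

lemma density_distrib {V : ℝ → ℝ} {μp μm : Measure ℝ}
    (H : ∀ φ : ℝ → ℝ, IntegrableOn φ (Icc (0:ℝ) 1) →
        (∫ t, φ t ∂μp) - (∫ t, φ t ∂μm) = ∫ t in Icc (0:ℝ) 1, φ t * V t)
    {t : ℝ} (ht : t ∈ Icc (0:ℝ) 1) :
    (μp (Icc 0 t)).toReal - (μm (Icc 0 t)).toReal = ∫ s in (0:ℝ)..t, V s := by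
  have h1 := H (indicator (Icc 0 t) 1)
    ((integrable_indicator_iff measurableSet_Icc).2 (integrable_const (1:ℝ)).integrableOn)
  rw [integral_indicator_one measurableSet_Icc, integral_indicator_one measurableSet_Icc] at h1
  change μp.real _ - μm.real _ = _
  rw [h1, intervalIntegral.integral_of_le ht.1, ← integral_Icc_eq_integral_Ioc]
  have : (fun s => indicator (Icc 0 t) (1 : ℝ → ℝ) s * V s) = indicator (Icc 0 t) V := by
    funext s
    by_cases hs : s ∈ Icc 0 t <;> simp [hs]
  rw [this, setIntegral_indicator measurableSet_Icc,
    inter_eq_right.2 (Icc_subset_Icc_right ht.2)]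

/-! ### The minimizing trajectory -/

/-- Unique minimizing trajectory in dimension one: for `λ` with `λ f(t) ∈ interior D_L` on
`[0,1]` and `x = ∫₀¹ f(t) K'(λ f(t)) dt`, the function `h*(t) = ∫₀ᵗ K'(λ f(s)) ds` belongs to
`BV[0,1]`, satisfies `∫₀¹ f dμ_{h*} = x` and `I_D(h*) = I_f(x)`, and it is the unique such
minimizer of `I_D` (uniqueness as functions on `[0,1]`). -/
theorem unique_minimizing_trajectory_dim_one
    {Ω : Type*} [MeasurableSpace Ω] (P : Measure Ω) [IsProbabilityMeasure P]
    (X1 : Ω → ℝ) (hX1 : Measurable X1)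
    (hCramer : (0:ℝ) ∈ interior (lapDom1 P X1))
    (hnc : ¬ ∃ c : ℝ, ∀ᵐ ω ∂P, X1 ω = c)
    (f : ℝ → ℝ) (hLip : ∃ C : NNReal, LipschitzOnWith C f (Icc (0:ℝ) 1))
    (hfne : ∃ t ∈ Icc (0:ℝ) 1, f t ≠ 0)
    (l : ℝ) (hl : ∀ t ∈ Icc (0:ℝ) 1, l * f t ∈ interior (lapDom1 P X1)) :
    (fun t => ∫ s in Ioc (0:ℝ) t, deriv (cgfK1 P X1) (l * f s)) ∈ BVset ℝ ∧
    StieltjesIntegralEq f (fun t => ∫ s in Ioc (0:ℝ) t, deriv (cgfK1 P X1) (l * f s))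
      (∫ t in Icc (0:ℝ) 1, f t * deriv (cgfK1 P X1) (l * f t)) ∧
    ID (rateI1 P X1) (fun t => ∫ s in Ioc (0:ℝ) t, deriv (cgfK1 P X1) (l * f s)) =
      rateIf1 P X1 f (∫ t in Icc (0:ℝ) 1, f t * deriv (cgfK1 P X1) (l * f t)) ∧
    ∀ h ∈ BVset ℝ,
      StieltjesIntegralEq f h (∫ t in Icc (0:ℝ) 1, f t * deriv (cgfK1 P X1) (l * f t)) →
      ID (rateI1 P X1) h =
        rateIf1 P X1 f (∫ t in Icc (0:ℝ) 1, f t * deriv (cgfK1 P X1) (l * f t)) →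
      Set.EqOn h (fun t => ∫ s in Ioc (0:ℝ) t, deriv (cgfK1 P X1) (l * f s))
        (Icc (0:ℝ) 1) := by
  have hD := lapDom1_eq P X1 hX1
  have hcgf := cgfK1_eq_cgf P X1 hX1
  set D := lapDom1 P X1 with hDdef
  set K := cgfK1 P X1 with hKdef
  have hT : ∀ w ∈ interior D, ∀ u ∈ D, K w + deriv K w * (u - w) ≤ K u := fun w hw u hu => by
    rw [hcgf]; exact cgf_tangent P X1 (hD ▸ hw) (hD ▸ hu)
  have hKan : AnalyticOnNhd ℝ K (interior D) := by
    rw [hcgf, hD]; exact ProbabilityTheory.analyticOnNhd_cgf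
  have hKc : ContinuousOn K (interior D) := hKan.continuousOn
  have hKc' : ContinuousOn (deriv K) (interior D) := hKan.deriv.continuousOn
  have hK0 : K 0 = 0 := by rw [hcgf]; exact ProbabilityTheory.cgf_zero
  obtain ⟨C, hC⟩ := hLip
  have hfc : ContinuousOn f (Icc (0:ℝ) 1) := hC.continuousOn
  -- `F` is the constant continuation of `f` outside `[0,1]`
  set F : ℝ → ℝ := IccExtend zero_le_one ((Icc (0:ℝ) 1).domRestrict f) with hF
  have hFf : ∀ t ∈ Icc (0:ℝ) 1, F t = f t := fun t ht => by
    rw [hF, IccExtend_of_mem _ _ ht]; rfl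
  have hFc : Continuous F := (continuousOn_iff_continuous_domRestrict.1 hfc).Icc_extend'
  have hFr : ∀ t, ∃ s ∈ Icc (0:ℝ) 1, F t = f s := fun t =>
    ⟨projIcc 0 1 zero_le_one t, (projIcc 0 1 zero_le_one t).2, rfl⟩
  have hFcomp : IsCompact (range F) := by
    rw [hF, IccExtend_range]
    exact isCompact_range (continuousOn_iff_continuous_domRestrict.1 hfc)
  set g : ℝ → ℝ := fun t => l * F t with hg
  have hgc : Continuous g := by fun_prop
  have hgU : ∀ t, g t ∈ interior D := fun t => by
    obtain ⟨s, hs, e⟩ := hFr t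
    simp only [hg, e]; exact hl s hs
  have hgr : IsCompact (range g) := by
    have : range g = (fun y => l * y) '' range F := by rw [← range_comp]; rfl
    rw [this]; exact hFcomp.image (by fun_prop)
  set V : ℝ → ℝ := fun t => deriv K (g t) with hV
  have hVc : Continuous V := hKc'.comp_continuous hgc hgU
  have hKg : Continuous fun t => K (g t) := hKc.comp_continuous hgc hgU
  have hint : ∀ w : ℝ → ℝ, Continuous w → IntegrableOn w (Icc (0:ℝ) 1) := fun w hw =>
    hw.continuousOn.integrableOn_compact isCompact_Icc
  set hs : ℝ → ℝ := fun t => ∫ s in Ioc (0:ℝ) t, deriv K (l * f s) with hhs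
  have hs_eq : ∀ t ∈ Icc (0:ℝ) 1, hs t = ∫ s in (0:ℝ)..t, V s := fun t ht => by
    rw [intervalIntegral.integral_of_le ht.1]
    refine setIntegral_congr_fun measurableSet_Ioc fun s hs => ?_
    simp only [hV, hg, hFf s ⟨hs.1.le, hs.2.trans ht.2⟩]
  set x : ℝ := ∫ t in Icc (0:ℝ) 1, f t * deriv K (l * f t) with hx
  have hxF : x = ∫ t in Icc (0:ℝ) 1, F t * V t :=
    setIntegral_congr_fun measurableSet_Icc fun s hs => by simp only [hV, hg, hFf s hs]
  have hEg : ∀ c, (∫ t in Icc (0:ℝ) 1, K (c * f t)) = ∫ t in Icc (0:ℝ) 1, K (c * F t) := fun c =>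
    setIntegral_congr_fun measurableSet_Icc fun s hs => by simp only [hFf s hs]
  -- the integrand of `l x - E_f(l)`, which is `I(V)`
  set Φ : ℝ → ℝ := fun t => g t * V t - K (g t) with hΦ
  have hgV : Continuous fun t => g t * V t := hgc.mul hVc
  have hFV : Continuous fun t => F t * V t := hFc.mul hVc
  have hΦc : Continuous Φ := hgV.sub hKg
  have hΦK : ∀ u ∈ D, ∀ s, u * V s - K u ≤ Φ s := fun u hu s => by
    have := hT _ (hgU s) u hu
    simp only [hΦ, hV]; linarith
  have hΦ0 : ∀ s, 0 ≤ Φ s := fun s => by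
    simpa [hK0] using hΦK 0 (interior_subset hCramer) s
  set v : ℝ := ∫ t in Icc (0:ℝ) 1, Φ t with hv
  have hv_eq : v = l * x - ∫ t in Icc (0:ℝ) 1, K (g t) := by
    rw [hv, hxF, ← integral_const_mul]
    simp only [hΦ]
    rw [integral_sub (hint _ hgV) (hint _ hKg)]
    simp only [hg, mul_assoc]
  have hv0 : 0 ≤ v := integral_nonneg hΦ0
  have hlE : l ∈ EfDom1 P X1 f := by
    refine ⟨(ae_restrict_iff' measurableSet_Icc).2 (ae_of_all _ fun t ht =>
      interior_subset (hl t ht)), ?_⟩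
    exact (hint _ hKg).congr_fun (fun t ht => by simp only [hg, hFf t ht]; rfl) measurableSet_Icc
  have hIf : rateIf1 P X1 f x = ENNReal.ofReal v := by
    refine le_antisymm (iSup₂_le fun c hc => ENNReal.ofReal_le_ofReal ?_) ?_
    · rw [hv_eq]
      have h1 : (∫ t in Icc (0:ℝ) 1, (K (g t) + (c - l) * (F t * V t))) ≤
          ∫ t in Icc (0:ℝ) 1, K (c * f t) := by
        refine integral_mono_ae ((hint _ hKg).add ((hint _ hFV).const_mul _)) hc.2 ?_
        filter_upwards [hc.1, ae_restrict_mem measurableSet_Icc] with t ht ht'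
        have := hT _ (hgU t) (c * f t) ht
        simp only [hV, hg, hFf t ht'] at this ⊢
        linarith
      rw [integral_add (hint _ hKg) ((hint _ hFV).const_mul _), integral_const_mul,
        ← hxF] at h1
      change c * x - (∫ t in Icc (0:ℝ) 1, K (c * f t)) ≤ _
      linarith
    · refine le_trans (le_of_eq ?_) (le_iSup₂_of_le l hlE le_rfl)
      rw [hv_eq]
      change _ = ENNReal.ofReal (l * x - ∫ t in Icc (0:ℝ) 1, K (l * f t))
      rw [hEg]
  have hmeasF : ∀ μ : Measure ℝ, μ (Icc (0:ℝ) 1)ᶜ = 0 → (∫ t, f t ∂μ) = ∫ t, F t ∂μ :=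
    fun μ hμ => integral_congr_ae (by
      have : ∀ᵐ t ∂μ, t ∈ Icc (0:ℝ) 1 := by rw [ae_iff]; exact hμ
      filter_upwards [this] with t ht using (hFf t ht).symm)
  have hdual : ∀ μp μm : Measure ℝ, μp (Icc (0:ℝ) 1)ᶜ = 0 → μm (Icc (0:ℝ) 1)ᶜ = 0 →
      (∫ t, f t ∂μp) - (∫ t, f t ∂μm) = x →
      (∫ t, g t ∂μp) - (∫ t, g t ∂μm) - (∫ t in Icc (0:ℝ) 1, K (g t)) = v := by
    intro μp μm hp hm hfx
    rw [hmeasF _ hp, hmeasF _ hm] at hfx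
    simp only [hg]
    rw [integral_const_mul, integral_const_mul, hv_eq, ← hfx]
    ring
  obtain ⟨νp, νm, hνpf, hνmf, hνp, hνm, hν⟩ := exists_density V hVc
  have hνx : (∫ t, f t ∂νp) - (∫ t, f t ∂νm) = x := by
    rw [hmeasF _ hνp, hmeasF _ hνm, hν _ (hint _ hFc), hxF]
  have hνh : ∀ t ∈ Icc (0:ℝ) 1, (νp (Icc 0 t)).toReal - (νm (Icc 0 t)).toReal = hs t :=
    fun t ht => (density_distrib hν ht).trans (hs_eq t ht).symm
  refine ⟨⟨⟨fun t ht => ?_, fun t ht => ?_⟩, ?_⟩,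
    ⟨νp, νm, hνpf, hνmf, hνp, hνm, hνh, hνx⟩, ?_, ?_⟩
  · rw [hs_eq t ⟨ht.1, ht.2.le⟩]
    have hcont : Continuous fun t => ∫ s in (0:ℝ)..t, V s :=
      intervalIntegral.continuous_primitive (fun a b => hVc.intervalIntegrable a b) 0
    refine (hcont.continuousAt.tendsto.mono_left nhdsWithin_le_nhds).congr' ?_
    filter_upwards [Ioo_mem_nhdsGT ht.2] with s hs'
    exact (hs_eq s ⟨ht.1.trans hs'.1.le, hs'.2.le⟩).symm
  · have hcont : Continuous fun t => ∫ s in (0:ℝ)..t, V s :=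
      intervalIntegral.continuous_primitive (fun a b => hVc.intervalIntegrable a b) 0
    refine ⟨∫ s in (0:ℝ)..t, V s,
      (hcont.continuousAt.tendsto.mono_left nhdsWithin_le_nhds).congr' ?_⟩
    filter_upwards [Ioo_mem_nhdsLT ht.1] with s hs'
    exact (hs_eq s ⟨hs'.1.le, hs'.2.le.trans ht.2⟩).symm
  · obtain ⟨M, hM⟩ := isCompact_Icc.exists_bound_of_continuousOn
      (hVc.continuousOn (s := Icc (0:ℝ) 1))
    have hLip : LipschitzOnWith M.toNNReal hs (Icc (0:ℝ) 1) := by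
      refine LipschitzOnWith.of_dist_le_mul fun a ha b hb => ?_
      rw [hs_eq a ha, hs_eq b hb, dist_eq_norm, intervalIntegral.integral_interval_sub_left
        (hVc.intervalIntegrable _ _) (hVc.intervalIntegrable _ _), Real.dist_eq]
      refine (intervalIntegral.norm_integral_le_of_norm_le_const fun s hs' => hM s ?_).trans
        (mul_le_mul_of_nonneg_right (Real.le_coe_toNNReal M) (abs_nonneg _))
      exact uIcc_subset_Icc hb ha (uIoc_subset_uIcc hs')
    have := hLip.locallyBoundedVariationOn 0 1 (by simp) (by simp)
    rwa [inter_self] at this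
  · rw [hIf]
    refine le_antisymm ?_ ?_
    · have := ID_upper D K V Φ hVc hΦc hΦ0 hΦK hs hs_eq
      rwa [intervalIntegral.integral_of_le zero_le_one, ← integral_Icc_eq_integral_Ioc] at this
    · have := ID_lower D K νp νm hνp hνm hs hνh g hgc (fun t => interior_subset (hgU t)) hKg
      rwa [hdual νp νm hνp hνm hνx] at this
  · rintro h - ⟨μp, μm, hpf, hmf, hp, hm, hh, hfx⟩ hIDh
    have hval := hdual μp μm hp hm hfx
    have hvar : ∀ φ : BoundedContinuousFunction ℝ ℝ,
        (∫ t, φ t ∂μp) - (∫ t, φ t ∂μm) ≤ ∫ t in Icc (0:ℝ) 1, φ t * V t := fun φ =>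
      first_variation D K hT hKc hKc' μp μm hp hm h hh g hgc hgU hgr (hval ▸ hv0)
        (by rw [hval, ← hIf]; exact hIDh.le) φ
    have hmeq : μp + νm = μm + νp := by
      refine ext_of_forall_integral_eq_of_IsFiniteMeasure fun φ => ?_
      rw [integral_add_measure (φ.integrable _) (φ.integrable _),
        integral_add_measure (φ.integrable _) (φ.integrable _)]
      have h1 := hvar φ
      -- the opposite inequality is the variation in the direction `-φ`
      have h2 := hvar (-φ)
      have h3 := hν φ (hint _ φ.continuous)
      simp only [BoundedContinuousFunction.coe_neg, Pi.neg_apply, neg_mul, integral_neg] at h2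
      linarith
    intro t ht
    have h1 : (μp + νm).real (Icc 0 t) = (μm + νp).real (Icc 0 t) := by rw [hmeq]
    rw [measureReal_add_apply, measureReal_add_apply] at h1
    change h t = hs t
    rw [← hh t ht, ← hνh t ht]
    change μp.real _ - μm.real _ = νp.real _ - νm.real _
    linarith
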